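/- Let Φ : ℝⁿ → ℝ be a C³ convex function, i.e., Φ ∈ C³(ℝⁿ) and Hess Φ(x) is positive semidefinite for every x ∈ ℝⁿ. Then the Cauchy problem for the multidimensional Burgers system ∂u/∂t + Σ_{j=1}^n u_j ∂u/∂x_j = 0 on [0,∞) × ℝⁿ with u(0,x) = ∇Φ(x) admits a unique global C² solution u on [0,∞) × ℝⁿ, and there exists a potential function U ∈ C³([0,∞) × ℝⁿ) such that u_i(t,x) = (∂U/∂x_i)(t,x) for all i = 1, …, n and all (t,x) ∈ [0,∞) × ℝⁿ. -/

import Mathlib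

/-!
The solution is built by characteristics. Write `g = ∇Φ`. Convexity says that the Jacobian of `g`
is positive semidefinite, so `g` is monotone and `y ↦ y + t g(y)` expands Euclidean distances for
every `t ≥ 0` (`flow_antilipschitz`), with invertible derivative `I + t Dg`
(`one_add_smul_injective`). Its range is closed by expansion and open by the inverse function
theorem, so it is a bijection of `ℝⁿ` (`flow_surjective`). Its inverse, the foot `Y(t,x)` of the
characteristic through `(t,x)`, is `C²` on `[0,∞) × ℝⁿ`: near each point it is the restriction of
a local inverse of `(t,y) ↦ (t, y + t g(y))`, which is defined for negative times too
(`exists_foot`).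

* Existence: `u = g(Y)` is a solution. Differentiating `Y + t g(Y) = x` in the direction `(1, u)`
  shows that `Y` is constant along characteristics (`foot_isGlobalSol`).
* Uniqueness: for any solution `u`, the defect `w(s) = u(s, y + s g(y)) - g(y)` satisfies
  `w' = -(D_x u) w` and `w(0) = 0`, so it vanishes by Gronwall's inequality (`sol_along_char`);
  hence `u = g(Y)`.
* Potential: the Hopf-Lax value `U = Φ(Y) + t |g(Y)|² / 2` has differential
  `⟨u, dx⟩ - (|u|²/2) dt` (`hopfLax_hasFDerivWithinAt`). This form is `C²`, so `U` is `C³`.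
-/

/-- The gradient `∇Φ(x) = (∂Φ/∂x₁, …, ∂Φ/∂xₙ)(x)`. -/
noncomputable def gradFn {n : ℕ} (Φ : (Fin n → ℝ) → ℝ) (x : Fin n → ℝ) : Fin n → ℝ :=
  fun i => fderiv ℝ Φ x (Pi.single i 1)

/-- The Hessian matrix `Hess Φ(x) = (∂²Φ/∂xᵢ∂xⱼ)(x)`. -/
noncomputable def hessMat {n : ℕ} (Φ : (Fin n → ℝ) → ℝ) (x : Fin n → ℝ) :
    Matrix (Fin n) (Fin n) ℝ :=
  Matrix.of fun i j => iteratedFDeriv ℝ 2 Φ x ![Pi.single i 1, Pi.single j 1]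

/-- `u : ℝ → (Fin n → ℝ) → (Fin n → ℝ)` is a global `C^k` solution on `[0,∞) × ℝⁿ` of the
multidimensional Burgers system `∂u/∂t + ∑ⱼ uⱼ ∂u/∂xⱼ = 0` with initial data `φ`. -/
def IsGlobalSolBurgers (n : ℕ) (φ : (Fin n → ℝ) → (Fin n → ℝ)) (k : ℕ∞)
    (u : ℝ → (Fin n → ℝ) → (Fin n → ℝ)) : Prop :=
  ContDiffOn ℝ k (fun p : ℝ × (Fin n → ℝ) => u p.1 p.2) (Set.Ici 0 ×ˢ Set.univ) ∧
  (∀ x, u 0 x = φ x) ∧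
  ∀ t ∈ Set.Ici (0 : ℝ), ∀ x : Fin n → ℝ, ∀ i : Fin n,
    derivWithin (fun s => u s x i) (Set.Ici 0) t
      + ∑ j : Fin n, u t x j * fderiv ℝ (fun y => u t y i) x (Pi.single j 1) = 0

/-- The closed space-time half space `[0,∞) × ℝⁿ`. -/
def halfSpace (n : ℕ) : Set (ℝ × (Fin n → ℝ)) := Set.Ici 0 ×ˢ Set.univ

lemma uniqueDiffOn_halfSpace (n : ℕ) : UniqueDiffOn ℝ (halfSpace n) :=
  (uniqueDiffOn_Ici 0).prod uniqueDiffOn_univ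

/-! ### The gradient of a convex function -/

lemma gradFn_contDiff {n : ℕ} {Φ : (Fin n → ℝ) → ℝ} (hΦ : ContDiff ℝ 3 Φ) :
    ContDiff ℝ 2 (gradFn Φ) := by
  rw [contDiff_pi]
  intro i
  have h : ContDiff ℝ 2 (fderiv ℝ Φ) := hΦ.fderiv_right (by norm_num)
  exact h.clm_apply contDiff_const

/-- A linear map on `ℝⁿ` is determined by its values on the standard basis. -/
lemma clm_apply_eq_sum {n : ℕ} {F : Type*} [NormedAddCommGroup F] [NormedSpace ℝ F]
    (L : (Fin n → ℝ) →L[ℝ] F) (v : Fin n → ℝ) :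
    L v = ∑ j, v j • L (Pi.single j 1) := by
  conv_lhs => rw [pi_eq_sum_univ' v]
  simp only [map_sum, map_smul]

lemma fderiv_eq_sum_gradFn {n : ℕ} (Φ : (Fin n → ℝ) → ℝ) (x v : Fin n → ℝ) :
    fderiv ℝ Φ x v = ∑ i, gradFn Φ x i * v i := by
  rw [clm_apply_eq_sum]
  simp [gradFn, mul_comm]

/-- Convexity of `Φ`, phrased as positivity of the Jacobian of `∇Φ`. -/
lemma fderiv_gradFn_nonneg {n : ℕ} {Φ : (Fin n → ℝ) → ℝ} (hΦ : ContDiff ℝ 3 Φ)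
    (hconv : ∀ x, (hessMat Φ x).PosSemidef) (x v : Fin n → ℝ) :
    0 ≤ ∑ i, v i * fderiv ℝ (gradFn Φ) x v i := by
  have h : ContDiff ℝ 2 (fderiv ℝ Φ) := hΦ.fderiv_right (by norm_num)
  have hd : HasFDerivAt (fderiv ℝ Φ) (fderiv ℝ (fderiv ℝ Φ) x) x :=
    (h.differentiable (by norm_num) x).hasFDerivAt
  have key : ∀ i, fderiv ℝ (gradFn Φ) x v i
      = fderiv ℝ (fderiv ℝ Φ) x v (Pi.single i 1) := by
    intro i
    have hg := ((gradFn_contDiff hΦ).differentiable (by norm_num) x).hasFDerivAt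
    have h1 := (hasFDerivAt_pi'.1 hg) i
    have h2 := hd.clm_apply (hasFDerivAt_const (Pi.single i (1 : ℝ)) x)
    have := congrArg (fun L => L v) (h1.unique h2)
    simpa using this
  have e1 : ∑ i, v i * fderiv ℝ (gradFn Φ) x v i = fderiv ℝ (fderiv ℝ Φ) x v v := by
    rw [clm_apply_eq_sum (fderiv ℝ (fderiv ℝ Φ) x v) v]
    simp [key]
  have e2 : star v ⬝ᵥ (hessMat Φ x).mulVec v = fderiv ℝ (fderiv ℝ Φ) x v v := by
    conv_rhs => rw [clm_apply_eq_sum (fderiv ℝ (fderiv ℝ Φ) x) v]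
    simp only [dotProduct, Matrix.mulVec, hessMat, Matrix.of_apply, iteratedFDeriv_two_apply,
      star_trivial, sum_apply, smul_apply, smul_eq_mul]
    refine Finset.sum_congr rfl fun i _ => ?_
    congr 1
    rw [clm_apply_eq_sum (fderiv ℝ (fderiv ℝ Φ) x _) v]
    simp [mul_comm]
  rw [e1, ← e2]
  exact (hconv x).dotProduct_mulVec_nonneg v

/-! ### The characteristic flow -/

/-- A positive field is monotone: `⟨g y - g z, y - z⟩ ≥ 0`. -/
lemma monotone_field {n : ℕ} {g : (Fin n → ℝ) → (Fin n → ℝ)} (hg : ContDiff ℝ 2 g)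
    (hpos : ∀ x v, 0 ≤ ∑ i, v i * fderiv ℝ g x v i) (y z : Fin n → ℝ) :
    0 ≤ ∑ i, (y i - z i) * (g y i - g z i) := by
  let h : ℝ → ℝ := fun s => ∑ i, (y - z) i * g (z + s • (y - z)) i
  have hd : ∀ s, HasDerivAt h
      (∑ i, (y - z) i * fderiv ℝ g (z + s • (y - z)) (y - z) i) s := by
    intro s
    refine HasDerivAt.fun_sum fun i _ => HasDerivAt.const_mul _ ?_
    have hl : HasDerivAt (fun s : ℝ => z + s • (y - z)) (y - z) s := by
      simpa using ((hasDerivAt_id s).smul_const (y - z)).const_add z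
    have := ((hg.differentiable (by norm_num) (z + s • (y - z))).hasFDerivAt).comp_hasDerivAt s hl
    exact (hasDerivAt_pi.1 this) i
  have hm : Monotone h := monotone_of_deriv_nonneg (fun s => (hd s).differentiableAt)
    fun s => by rw [(hd s).deriv]; exact hpos _ _
  have h01 := hm (zero_le_one (α := ℝ))
  have : h 1 - h 0 = ∑ i, (y i - z i) * (g y i - g z i) := by
    simp only [h, ← Finset.sum_sub_distrib]
    refine Finset.sum_congr rfl fun i _ => ?_
    simp
    ring
  linarith

/-- The flow map `y ↦ y + t g(y)` expands Euclidean distances; the factor `n + 1` pays for the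
sup norm. -/
lemma flow_antilipschitz {n : ℕ} {g : (Fin n → ℝ) → (Fin n → ℝ)} (hg : ContDiff ℝ 2 g)
    (hpos : ∀ x v, 0 ≤ ∑ i, v i * fderiv ℝ g x v i) {t : ℝ} (ht : 0 ≤ t) :
    AntilipschitzWith (n + 1) (fun y => y + t • g y) := by
  refine AntilipschitzWith.of_le_mul_dist fun y z => ?_
  rw [dist_eq_norm, dist_eq_norm]
  set e := y + t • g y - (z + t • g z) with he
  have hei : ∀ i, e i = (y i - z i) + t * (g y i - g z i) := by
    intro i; simp [he]; ring
  have h1 : ∑ i, (y i - z i) ^ 2 ≤ ∑ i, (y i - z i) * e i := by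
    have : ∑ i, (y i - z i) * e i
        = ∑ i, (y i - z i) ^ 2 + t * ∑ i, (y i - z i) * (g y i - g z i) := by
      rw [Finset.mul_sum, ← Finset.sum_add_distrib]
      refine Finset.sum_congr rfl fun i _ => ?_
      rw [hei]; ring
    have := mul_nonneg ht (monotone_field hg hpos y z)
    linarith
  have h2 : ∑ i, (y i - z i) * e i ≤ n * (‖y - z‖ * ‖e‖) := by
    calc ∑ i, (y i - z i) * e i ≤ ∑ _i : Fin n, ‖y - z‖ * ‖e‖ := by
          refine Finset.sum_le_sum fun i _ => ?_
          refine (le_abs_self _).trans ?_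
          rw [abs_mul]
          exact mul_le_mul (norm_le_pi_norm (y - z) i) (norm_le_pi_norm e i) (abs_nonneg _)
            (norm_nonneg _)
      _ = n * (‖y - z‖ * ‖e‖) := by simp
  have h3 : ‖y - z‖ ≤ Real.sqrt (n * (‖y - z‖ * ‖e‖)) := by
    refine (pi_norm_le_iff_of_nonneg (Real.sqrt_nonneg _)).2 fun i => ?_
    refine Real.abs_le_sqrt ?_
    have := Finset.single_le_sum (f := fun i => (y i - z i) ^ 2) (fun i _ => sq_nonneg _)
      (Finset.mem_univ i)
    simp only [Pi.sub_apply]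
    linarith
  have h4 : ‖y - z‖ ^ 2 ≤ n * (‖y - z‖ * ‖e‖) := by
    have h5 : 0 ≤ (n : ℝ) * (‖y - z‖ * ‖e‖) := by positivity
    calc _ ≤ _ := pow_le_pow_left₀ (norm_nonneg _) h3 2
      _ = _ := Real.sq_sqrt h5
  push_cast
  rcases (norm_nonneg (y - z)).eq_or_lt with h0 | h0
  · rw [← h0]; positivity
  · have : ‖y - z‖ ≤ n * ‖e‖ := by
      refine le_of_mul_le_mul_left ?_ h0
      nlinarith
    nlinarith [norm_nonneg e]

lemma one_add_smul_injective {n : ℕ} {A : (Fin n → ℝ) →L[ℝ] (Fin n → ℝ)}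
    (hA : ∀ v, 0 ≤ ∑ i, v i * A v i) {t : ℝ} (ht : 0 ≤ t) {v : Fin n → ℝ}
    (hv : v + t • A v = 0) : v = 0 := by
  have h1 : ∑ i, v i ^ 2 + t * ∑ i, v i * A v i = 0 := by
    rw [Finset.mul_sum, ← Finset.sum_add_distrib]
    refine Finset.sum_eq_zero fun i _ => ?_
    have := congrFun hv i
    simp only [Pi.add_apply, Pi.smul_apply, smul_eq_mul, Pi.zero_apply] at this
    linear_combination v i * this
  have h2 := mul_nonneg ht (hA v)
  have h3 : ∑ i, v i ^ 2 = 0 :=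
    le_antisymm (by linarith) (Finset.sum_nonneg fun i _ => sq_nonneg _)
  ext i
  have := (Finset.sum_eq_zero_iff_of_nonneg fun i _ => sq_nonneg _).1 h3 i (Finset.mem_univ i)
  simpa using this

/-- Surjectivity comes from connectedness: the range of the flow map is closed by expansion and
open by the inverse function theorem. -/
lemma flow_surjective {n : ℕ} {g : (Fin n → ℝ) → (Fin n → ℝ)} (hg : ContDiff ℝ 2 g)
    (hpos : ∀ x v, 0 ≤ ∑ i, v i * fderiv ℝ g x v i) {t : ℝ} (ht : 0 ≤ t) :
    Function.Surjective (fun y => y + t • g y) := by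
  have hal := flow_antilipschitz hg hpos ht
  have hstrict : ∀ y, HasStrictFDerivAt (fun y => y + t • g y)
      (ContinuousLinearMap.id ℝ _ + t • fderiv ℝ g y) y := fun y =>
    (hasStrictFDerivAt_id y).add
      ((hg.contDiffAt.hasStrictFDerivAt (by norm_num)).const_smul t)
  have hopen : IsOpenMap (fun y => y + t • g y) := by
    refine IsOpenMap.of_nhds_le fun y => ?_
    refine ((hstrict y).map_nhds_eq_of_surj ?_).ge
    rw [LinearMap.range_eq_top]
    refine LinearMap.injective_iff_surjective.1 ?_
    refine (injective_iff_map_eq_zero _).2 fun v hv => ?_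
    exact one_add_smul_injective (hpos y) ht (by simpa using hv)
  have hcont : Continuous (fun y => y + t • g y) :=
    continuous_id.add (hg.continuous.const_smul t)
  have hclosed : IsClosed (Set.range fun y => y + t • g y) := by
    refine isClosed_of_closure_subset fun x hx => ?_
    obtain ⟨s, hs, hlim⟩ := mem_closure_iff_seq_limit.1 hx
    choose y hy using hs
    have hc : CauchySeq y := by
      rw [Metric.cauchySeq_iff']
      intro ε hε
      obtain ⟨N, hN⟩ := Metric.cauchySeq_iff'.1 hlim.cauchySeq (ε / (n + 1)) (by positivity)
      refine ⟨N, fun m hm => ?_⟩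
      have h1 := hal.le_mul_dist (y m) (y N)
      have h2 := hN m hm
      rw [← hy m, ← hy N, lt_div_iff₀ (by positivity)] at h2
      push_cast at h1
      linarith
    obtain ⟨y₀, hy₀⟩ := cauchySeq_tendsto_of_complete hc
    refine ⟨y₀, tendsto_nhds_unique ((hcont.tendsto y₀).comp hy₀) ?_⟩
    convert hlim using 1
    exact funext hy
  rw [← Set.range_eq_univ]
  exact IsClopen.eq_univ ⟨hclosed, hopen.isOpen_range⟩ (Set.range_nonempty _)

/-- The foot `Y(t,x)` of the characteristic through `(t,x)` can be chosen `C²` up to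
the boundary `t = 0`. Near each point it is the restriction of a local inverse of
`(t,y) ↦ (t, y + t g(y))` on a full neighbourhood in `ℝ × ℝⁿ`. -/
lemma exists_foot {n : ℕ} {g : (Fin n → ℝ) → (Fin n → ℝ)} (hg : ContDiff ℝ 2 g)
    (hpos : ∀ x v, 0 ≤ ∑ i, v i * fderiv ℝ g x v i) :
    ∃ Y : ℝ × (Fin n → ℝ) → (Fin n → ℝ), ContDiffOn ℝ 2 Y (halfSpace n) ∧
      ∀ p ∈ halfSpace n, Y p + p.1 • g (Y p) = p.2 := by
  have hsurj : ∀ p : ℝ × (Fin n → ℝ), ∃ y, p ∈ halfSpace n → y + p.1 • g y = p.2 := by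
    intro p
    by_cases hp : p ∈ halfSpace n
    · obtain ⟨y, hy⟩ := flow_surjective hg hpos hp.1 p.2
      exact ⟨y, fun _ => hy⟩
    · exact ⟨0, fun h => absurd h hp⟩
  choose Y hY using hsurj
  refine ⟨Y, fun p hp => ?_, hY⟩
  set G : ℝ × (Fin n → ℝ) → ℝ × (Fin n → ℝ) := fun q => (q.1, q.2 + q.1 • g q.2) with hG
  set a : ℝ × (Fin n → ℝ) := (p.1, Y p) with ha
  have hGa : G a = p := Prod.ext rfl (hY p hp)
  have hGc : ContDiff ℝ 2 G :=
    contDiff_fst.prodMk (contDiff_snd.add (contDiff_fst.smul (hg.comp contDiff_snd)))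
  have hder : HasFDerivAt G ((ContinuousLinearMap.fst ℝ ℝ (Fin n → ℝ)).prod
      (ContinuousLinearMap.snd ℝ ℝ (Fin n → ℝ) +
        (a.1 • (fderiv ℝ g a.2).comp (ContinuousLinearMap.snd ℝ ℝ (Fin n → ℝ)) +
          (ContinuousLinearMap.fst ℝ ℝ (Fin n → ℝ)).smulRight (g a.2)))) a := by
    have h1 : HasFDerivAt (fun q : ℝ × (Fin n → ℝ) => g q.2) ((fderiv ℝ g a.2).comp
        (ContinuousLinearMap.snd ℝ ℝ (Fin n → ℝ))) a :=
      HasFDerivAt.comp a (hg.differentiable (by norm_num) a.2).hasFDerivAt hasFDerivAt_snd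
    exact hasFDerivAt_fst.prodMk (hasFDerivAt_snd.add (hasFDerivAt_fst.smul h1))
  set D := ((ContinuousLinearMap.fst ℝ ℝ (Fin n → ℝ)).prod
      (ContinuousLinearMap.snd ℝ ℝ (Fin n → ℝ) +
        (a.1 • (fderiv ℝ g a.2).comp (ContinuousLinearMap.snd ℝ ℝ (Fin n → ℝ)) +
          (ContinuousLinearMap.fst ℝ ℝ (Fin n → ℝ)).smulRight (g a.2)))) with hD
  have hinj : Function.Injective (D : ℝ × (Fin n → ℝ) →ₗ[ℝ] ℝ × (Fin n → ℝ)) := by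
    refine (injective_iff_map_eq_zero _).2 fun w hw => ?_
    have hw1 : w.1 = 0 := congrArg Prod.fst hw
    have hw2 : w.2 + (a.1 • fderiv ℝ g a.2 w.2 + w.1 • g a.2) = 0 := congrArg Prod.snd hw
    rw [hw1, zero_smul, add_zero] at hw2
    exact Prod.ext hw1 (one_add_smul_injective (hpos _) hp.1 hw2)
  let e : (ℝ × (Fin n → ℝ)) ≃L[ℝ] (ℝ × (Fin n → ℝ)) :=
    (LinearEquiv.ofInjectiveEndo _ hinj).toContinuousLinearEquiv
  have hder' : HasFDerivAt G (e : ℝ × (Fin n → ℝ) →L[ℝ] ℝ × (Fin n → ℝ)) a := by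
    have he : (e : ℝ × (Fin n → ℝ) →L[ℝ] ℝ × (Fin n → ℝ)) = D :=
      ContinuousLinearMap.ext fun w => rfl
    rwa [he]
  have hloc := hGc.contDiffAt.to_localInverse hder' (by norm_num)
  have hev : ∀ᶠ q in nhds (G a), G (hGc.contDiffAt.localInverse hder' (by norm_num) q) = q :=
    HasStrictFDerivAt.eventually_right_inverse _
  rw [hGa] at hloc hev
  have hsnd := (contDiff_snd.contDiffAt.comp p hloc).contDiffWithinAt (s := halfSpace n)
  refine hsnd.congr_of_eventuallyEq_of_mem ?_ hp
  filter_upwards [nhdsWithin_le_nhds hev, self_mem_nhdsWithin] with q hq hqs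
  have h1 := congrArg Prod.fst hq
  have h2 := congrArg Prod.snd hq
  simp only [hG] at h1 h2
  rw [h1] at h2
  exact (flow_antilipschitz hg hpos hqs.1).injective ((hY q hqs).trans h2.symm)

/-! ### The equation along space-time directions -/

lemma HasFDerivWithinAt.time_slice {n : ℕ} {F : Type*} [NormedAddCommGroup F] [NormedSpace ℝ F]
    {f : ℝ × (Fin n → ℝ) → F} {L : ℝ × (Fin n → ℝ) →L[ℝ] F} {t : ℝ} {x : Fin n → ℝ}
    (ht : 0 ≤ t) (h : HasFDerivWithinAt f L (halfSpace n) (t, x)) :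
    HasFDerivAt (fun y => f (t, y)) (L.comp (ContinuousLinearMap.inr ℝ ℝ (Fin n → ℝ))) x :=
  HasFDerivWithinAt.comp_hasFDerivAt x h (hasFDerivAt_prodMk_right t x)
    (Filter.Eventually.of_forall fun _ => ⟨ht, trivial⟩)

/-- The left-hand side of the Burgers equation is the space-time derivative of `u` in the
characteristic direction `(1, u)`. -/
lemma burgers_lhs_eq {n : ℕ} {u : ℝ → (Fin n → ℝ) → (Fin n → ℝ)}
    {L : ℝ × (Fin n → ℝ) →L[ℝ] (Fin n → ℝ)} {t : ℝ} {x : Fin n → ℝ} (ht : 0 ≤ t)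
    (h : HasFDerivWithinAt (fun p : ℝ × (Fin n → ℝ) => u p.1 p.2) L (halfSpace n) (t, x))
    (i : Fin n) :
    derivWithin (fun s => u s x i) (Set.Ici 0) t
      + ∑ j : Fin n, u t x j * fderiv ℝ (fun y => u t y i) x (Pi.single j 1)
      = L (1, u t x) i := by
  have h1 : HasDerivWithinAt (fun s => u s x) (L (1, 0)) (Set.Ici 0) t :=
    HasFDerivWithinAt.comp_hasDerivWithinAt (f := fun s => (s, x)) t h
      ((hasDerivWithinAt_id t _).prodMk (hasDerivWithinAt_const t _ x))
      (fun s hs => (⟨hs, trivial⟩ : (s, x) ∈ halfSpace n))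
  have h2 := (hasDerivWithinAt_pi.1 h1) i
  have h3 := (hasFDerivAt_pi'.1 (h.time_slice ht)) i
  rw [h2.derivWithin (uniqueDiffOn_Ici 0 t ht), h3.fderiv]
  have h4 := clm_apply_eq_sum ((ContinuousLinearMap.proj i : (Fin n → ℝ) →L[ℝ] ℝ).comp
    (L.comp (ContinuousLinearMap.inr ℝ ℝ (Fin n → ℝ)))) (u t x)
  simp only [smul_eq_mul] at h4
  have h5 : L (1, u t x) = L (1, 0) + L (0, u t x) := by rw [← map_add]; simp
  rw [h5]
  exact congrArg (L (1, 0) i + ·) h4.symm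

/-- Solutions are constant along characteristics: the defect `u(s, y + s g(y)) - g(y)` satisfies
a linear differential equation and vanishes at `s = 0`. -/
lemma sol_along_char {n : ℕ} {g : (Fin n → ℝ) → (Fin n → ℝ)}
    {u : ℝ → (Fin n → ℝ) → (Fin n → ℝ)} (hu : IsGlobalSolBurgers n g 2 u) {t : ℝ} (ht : 0 ≤ t)
    (y : Fin n → ℝ) : u t (y + t • g y) = g y := by
  obtain ⟨hC, h0, hE⟩ := hu
  set f : ℝ × (Fin n → ℝ) → (Fin n → ℝ) := fun p => u p.1 p.2 with hf
  change ContDiffOn ℝ 2 f (halfSpace n) at hC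
  let c : ℝ → ℝ × (Fin n → ℝ) := fun s => (s, y + s • g y)
  have hcm : Set.MapsTo c (Set.Ici 0) (halfSpace n) := fun s hs => ⟨hs, trivial⟩
  have hcd : ∀ s, HasDerivAt c (1, g y) s := fun s =>
    (hasDerivAt_id s).prodMk
      (by simpa using ((hasDerivAt_id s).smul_const (g y)).const_add y)
  have hcc : Continuous c := continuous_iff_continuousAt.2 fun s => (hcd s).continuousAt
  have hfd : ∀ s, 0 ≤ s →
      HasFDerivWithinAt f (fderivWithin ℝ f (halfSpace n) (c s)) (halfSpace n) (c s) :=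
    fun s hs => (hC.differentiableOn (by norm_num) _ (hcm hs)).hasFDerivWithinAt
  have hw : ∀ s, 0 ≤ s → HasDerivWithinAt (fun s => f (c s) - g y)
      (fderivWithin ℝ f (halfSpace n) (c s) (1, g y)) (Set.Ici 0) s := fun s hs =>
    ((hfd s hs).comp_hasDerivWithinAt s (hcd s).hasDerivWithinAt hcm).sub_const _
  have hode : ∀ s, 0 ≤ s → fderivWithin ℝ f (halfSpace n) (c s) (1, g y)
      = - fderivWithin ℝ f (halfSpace n) (c s) (0, f (c s) - g y) := by
    intro s hs
    have hz : fderivWithin ℝ f (halfSpace n) (c s) (1, f (c s)) = 0 := by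
      ext i
      rw [Pi.zero_apply, ← hE s hs (y + s • g y) i]
      exact (burgers_lhs_eq hs (hfd s hs) i).symm
    rw [eq_neg_iff_add_eq_zero, ← map_add, ← hz]
    simp
  have hcont : ContinuousOn (fun s => fderivWithin ℝ f (halfSpace n) (c s)) (Set.Icc 0 t) :=
    (hC.continuousOn_fderivWithin (uniqueDiffOn_halfSpace n) (by norm_num)).comp
      hcc.continuousOn (fun s hs => hcm hs.1)
  obtain ⟨K, hK⟩ := isCompact_Icc.exists_bound_of_continuousOn hcont
  have hzero := eq_zero_of_abs_deriv_le_mul_abs_self_of_eq_zero_right (K := K)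
    (f := fun s => f (c s) - g y) (a := 0) (b := t)
    (fun s hs => ((hw s hs.1).mono fun r hr => hr.1).continuousWithinAt)
    (fun s hs => (hw s hs.1).mono (Set.Ici_subset_Ici.2 hs.1))
    (by simp [hf, c, h0])
    (fun s hs => by
      rw [hode s hs.1, norm_neg]
      refine (ContinuousLinearMap.le_opNorm _ _).trans ?_
      refine mul_le_mul (hK s ⟨hs.1, hs.2.le⟩) ?_ (norm_nonneg _)
        ((norm_nonneg _).trans (hK s ⟨hs.1, hs.2.le⟩))
      simp [Prod.norm_def])
    t ⟨ht, le_rfl⟩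
  exact sub_eq_zero.1 hzero

/-- Differentiating `Y + t g(Y) = x`. -/
lemma foot_deriv {n : ℕ} {g : (Fin n → ℝ) → (Fin n → ℝ)} (hg : ContDiff ℝ 2 g)
    {Y : ℝ × (Fin n → ℝ) → (Fin n → ℝ)}
    (hY : ∀ p ∈ halfSpace n, Y p + p.1 • g (Y p) = p.2) {p : ℝ × (Fin n → ℝ)}
    (hp : p ∈ halfSpace n) {Y' : ℝ × (Fin n → ℝ) →L[ℝ] (Fin n → ℝ)}
    (hY' : HasFDerivWithinAt Y Y' (halfSpace n) p) (w : ℝ × (Fin n → ℝ)) :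
    Y' w + (p.1 • fderiv ℝ g (Y p) (Y' w) + w.1 • g (Y p)) = w.2 := by
  have h1 : HasFDerivWithinAt (fun q => g (Y q)) ((fderiv ℝ g (Y p)).comp Y') (halfSpace n) p :=
    (hg.differentiable (by norm_num) (Y p)).hasFDerivAt.comp_hasFDerivWithinAt p hY'
  have h2 := hY'.add (hasFDerivWithinAt_fst.smul h1)
  have h3 : HasFDerivWithinAt _ (ContinuousLinearMap.snd ℝ ℝ (Fin n → ℝ)) (halfSpace n) p :=
    hasFDerivWithinAt_snd.congr hY (hY p hp)
  have := (uniqueDiffOn_halfSpace n p hp).eq h2 h3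
  exact congrArg (fun L => L w) this

lemma foot_isGlobalSol {n : ℕ} {g : (Fin n → ℝ) → (Fin n → ℝ)} (hg : ContDiff ℝ 2 g)
    (hpos : ∀ x v, 0 ≤ ∑ i, v i * fderiv ℝ g x v i)
    {Y : ℝ × (Fin n → ℝ) → (Fin n → ℝ)} (hYc : ContDiffOn ℝ 2 Y (halfSpace n))
    (hY : ∀ p ∈ halfSpace n, Y p + p.1 • g (Y p) = p.2) :
    IsGlobalSolBurgers n g 2 (fun t x => g (Y (t, x))) := by
  refine ⟨hg.comp_contDiffOn hYc, fun x => ?_, fun t ht x i => ?_⟩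
  · have := hY (0, x) ⟨le_refl (0 : ℝ), trivial⟩
    simp only [zero_smul, add_zero] at this
    simp only [this]
  · have hp : (t, x) ∈ halfSpace n := ⟨ht, trivial⟩
    have hY' := (hYc.differentiableOn (by norm_num) _ hp).hasFDerivWithinAt
    have h1 : HasFDerivWithinAt (fun q => g (Y q))
        ((fderiv ℝ g (Y (t, x))).comp (fderivWithin ℝ Y (halfSpace n) (t, x))) (halfSpace n)
        (t, x) :=
      (hg.differentiable (by norm_num) _).hasFDerivAt.comp_hasFDerivWithinAt _ hY'
    rw [burgers_lhs_eq (u := fun t x => g (Y (t, x))) ht h1 i]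
    -- the foot does not move along its own characteristic
    have h2 := foot_deriv hg hY hp hY' (1, g (Y (t, x)))
    rw [one_smul, ← add_assoc, add_eq_right] at h2
    have h3 := one_add_smul_injective (hpos _) ht h2
    simp [h3]

/-! ### The potential -/

/-- The differential `⟨u, dx⟩ - (|u|²/2) dt` of the action. -/
noncomputable def actionForm {n : ℕ} (v : Fin n → ℝ) : ℝ × (Fin n → ℝ) →L[ℝ] ℝ :=
  (∑ i, v i • (ContinuousLinearMap.proj i : (Fin n → ℝ) →L[ℝ] ℝ).comp
    (ContinuousLinearMap.snd ℝ ℝ (Fin n → ℝ)))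
  - ((∑ i, v i ^ 2) / 2) • ContinuousLinearMap.fst ℝ ℝ (Fin n → ℝ)

lemma actionForm_apply {n : ℕ} (v : Fin n → ℝ) (w : ℝ × (Fin n → ℝ)) :
    actionForm v w = ∑ i, v i * w.2 i - (∑ i, v i ^ 2) / 2 * w.1 := by
  simp [actionForm]

lemma actionForm_contDiff {n : ℕ} : ContDiff ℝ 2 (actionForm (n := n)) := by
  unfold actionForm
  fun_prop

/-- The Hopf-Lax value `Φ(Y) + t |∇Φ(Y)|²/2` has differential `⟨u, dx⟩ - (|u|²/2) dt`
with `u = ∇Φ(Y)`. -/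
lemma hopfLax_hasFDerivWithinAt {n : ℕ} {Φ : (Fin n → ℝ) → ℝ} (hΦ : ContDiff ℝ 3 Φ)
    {Y : ℝ × (Fin n → ℝ) → (Fin n → ℝ)} (hYc : ContDiffOn ℝ 2 Y (halfSpace n))
    (hY : ∀ p ∈ halfSpace n, Y p + p.1 • gradFn Φ (Y p) = p.2) {p : ℝ × (Fin n → ℝ)}
    (hp : p ∈ halfSpace n) :
    HasFDerivWithinAt (fun q => Φ (Y q) + q.1 * ∑ i, gradFn Φ (Y q) i ^ 2 / 2)
      (actionForm (gradFn Φ (Y p))) (halfSpace n) p := by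
  have hg := gradFn_contDiff hΦ
  have hY' := (hYc.differentiableOn (by norm_num) _ hp).hasFDerivWithinAt
  have h1 : HasFDerivWithinAt (fun q => gradFn Φ (Y q))
      ((fderiv ℝ (gradFn Φ) (Y p)).comp (fderivWithin ℝ Y (halfSpace n) p)) (halfSpace n) p :=
    (hg.differentiable (by norm_num) _).hasFDerivAt.comp_hasFDerivWithinAt _ hY'
  have h2 : HasFDerivWithinAt (fun q => Φ (Y q))
      ((fderiv ℝ Φ (Y p)).comp (fderivWithin ℝ Y (halfSpace n) p)) (halfSpace n) p :=
    (hΦ.differentiable (by norm_num) _).hasFDerivAt.comp_hasFDerivWithinAt _ hY'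
  have h3 := h2.add ((hasFDerivWithinAt_fst (s := halfSpace n) (p := p)).mul
    (HasFDerivWithinAt.fun_sum (u := Finset.univ)
      fun i _ => (((hasFDerivWithinAt_pi'.1 h1 i).pow 2).mul_const (1 / 2 : ℝ))))
  have h4 : (fun q : ℝ × (Fin n → ℝ) => Φ (Y q) + q.1 * ∑ i, gradFn Φ (Y q) i ^ 2 / 2) =
      (fun q => Φ (Y q)) + (Prod.fst * fun q => ∑ i, gradFn Φ (Y q) i ^ 2 * (1 / 2 : ℝ)) := by
    ext q
    simp [div_eq_mul_inv]
  rw [h4]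
  refine h3.congr_fderiv (ContinuousLinearMap.ext fun w => ?_)
  rw [actionForm_apply]
  have h5 := foot_deriv hg hY hp hY' w
  set A := fderivWithin ℝ Y (halfSpace n) p w with hA
  simp only [add_apply, smul_apply,
    sum_apply, ContinuousLinearMap.comp_apply, ← hA,
    fderiv_eq_sum_gradFn, smul_eq_mul, ContinuousLinearMap.coe_fst', ContinuousLinearMap.proj_apply,
    nsmul_eq_mul]
  rw [← h5, Finset.sum_div, Finset.mul_sum, Finset.sum_mul, Finset.sum_mul,
    ← Finset.sum_add_distrib, ← Finset.sum_add_distrib, ← Finset.sum_sub_distrib]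
  refine Finset.sum_congr rfl fun i _ => ?_
  simp
  ring

/-! ### Conclusion -/

/-- for a `C³` convex `Φ` (Hessian positive semidefinite everywhere), the
Cauchy problem for the Burgers system with data `∇Φ` admits a unique global `C²` solution
on `[0,∞) × ℝⁿ`, and every such solution has a `C³` potential `U` with `uᵢ = ∂U/∂xᵢ`. -/
theorem burgers_convex_global_C2_solution_and_potential
    (n : ℕ) (Φ : (Fin n → ℝ) → ℝ) (hΦ : ContDiff ℝ 3 Φ)
    (hconv : ∀ x : Fin n → ℝ, (hessMat Φ x).PosSemidef) :
    (∃ u, IsGlobalSolBurgers n (gradFn Φ) 2 u) ∧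
    (∀ u v, IsGlobalSolBurgers n (gradFn Φ) 2 u → IsGlobalSolBurgers n (gradFn Φ) 2 v →
      ∀ t ∈ Set.Ici (0 : ℝ), ∀ x, u t x = v t x) ∧
    ∀ u, IsGlobalSolBurgers n (gradFn Φ) 2 u →
      ∃ U : ℝ → (Fin n → ℝ) → ℝ,
        ContDiffOn ℝ 3 (fun p : ℝ × (Fin n → ℝ) => U p.1 p.2) (Set.Ici 0 ×ˢ Set.univ) ∧
        ∀ t ∈ Set.Ici (0 : ℝ), ∀ x : Fin n → ℝ, ∀ i : Fin n,
          u t x i = fderiv ℝ (U t) x (Pi.single i 1) := by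
  have hg := gradFn_contDiff hΦ
  have hpos := fderiv_gradFn_nonneg hΦ hconv
  obtain ⟨Y, hYc, hY⟩ := exists_foot hg hpos
  have hrep : ∀ u, IsGlobalSolBurgers n (gradFn Φ) 2 u → ∀ t ∈ Set.Ici (0 : ℝ), ∀ x,
      u t x = gradFn Φ (Y (t, x)) := by
    intro u hu t ht x
    have h := sol_along_char hu ht (Y (t, x))
    have h' : Y (t, x) + t • gradFn Φ (Y (t, x)) = x := hY (t, x) ⟨ht, trivial⟩
    rwa [h'] at h
  refine ⟨⟨_, foot_isGlobalSol hg hpos hYc hY⟩, fun u v hu hv t ht x => ?_, fun u hu => ?_⟩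
  · rw [hrep u hu t ht x, hrep v hv t ht x]
  · refine ⟨fun t x => Φ (Y (t, x)) + t * ∑ i, gradFn Φ (Y (t, x)) i ^ 2 / 2, ?_, ?_⟩
    · have h3 : (3 : WithTop ℕ∞) = 2 + 1 := by norm_num
      rw [h3, contDiffOn_succ_iff_hasFDerivWithinAt (by norm_num)]
      intro p hp
      refine ⟨halfSpace n, ?_, fun h => absurd h (by norm_num),
        fun q => actionForm (gradFn Φ (Y q)),
        fun q hq => hopfLax_hasFDerivWithinAt hΦ hYc hY hq,
        actionForm_contDiff.comp_contDiffOn (hg.comp_contDiffOn hYc)⟩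
      rw [Set.insert_eq_of_mem hp]
      exact self_mem_nhdsWithin
    · intro t ht x i
      have h := (hopfLax_hasFDerivWithinAt hΦ hYc hY
        (p := (t, x)) ⟨ht, trivial⟩).time_slice ht
      rw [h.fderiv, hrep u hu t ht x]
      simp [actionForm_apply, Pi.single_apply]
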